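/- arXiv:1212.6451 — 2 statements merged into one kernel-verified Lean document; each statement's English description precedes it below -/
import Mathlib

section
/- Let Ψ be a critical branching mechanism which is regularly varying at 0 with index γ ∈ (1,2]. Let (ν_t)_{t>0} be a family of nonzero finite Borel measures on (0,∞) such that φ(t,q) = ∫_{(0,∞)} (1 − e^{−qx}) ν_t(dx) satisfies ∂_t φ(t,q) = −Ψ(φ(t,q)) for all t > 0 and all q ∈ (0,∞], where φ(t,∞) := ν_t((0,∞)). Suppose there exist functions α, λ : (0,∞) → (0,∞) and a nonzero finite Borel measure ν̂ on (0,∞) such that for every bounded continuous f : (0,∞) → ℝ, α(t) ∫_{(0,∞)} f(λ(t) x) ν_t(dx) → ∫_{(0,∞)} f dν̂ as t → ∞. Then there exists ρ ∈ (0,1] such that for every fixed t > 0, the rescaled measures A ↦ α(s) ν_{st}({λ(s)^{−1} x : x ∈ A}) converge weakly as s → ∞ to the measure A ↦ t^{1/(1−γ)} ν̂({t^{1/(ρ(1−γ))} x : x ∈ A}), i.e. for every bounded continuous f : (0,∞) → ℝ, α(s) ∫ f(λ(s)x) ν_{st}(dx) → t^{1/(1−γ)} ∫ f(t^{1/(ρ(γ−1))}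 x) ν̂(dx) as s → ∞. -/
open MeasureTheory Set Filter

noncomputable section

open scoped Topology

/-!
Let `T u = ∫ v in u..1, (Ψ v)⁻¹` be the time coordinate of the flow `y' = -Ψ(y)`. Along every
solution `T (y t) - t` is constant, so the delay `τ q = T (φ (t, q)) - T (φ (t, ∞))` does not depend
on `t`. By Karamata's theorem `T` is regularly varying at `0` with index `1 - γ`, and
`T (φ (s, ∞)) ~ s`; hence the scaling limit forces `τ (q * λ s) / s → h q`, where
`h q = (φ̂ q / φ̂ ∞) ^ (1 - γ) - 1`.

As `τ` is monotone, this limit can be inverted: `λ (s * t) / λ s → r / q` whenever `h r = t * h q`.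
The left side does not involve `q`, so `h / h 1` is multiplicative, that is
`h q = h 1 * q ^ (-c)`, and `λ s / λ (s * t) → t ^ (1 / c)`. Concavity of `φ̂` gives
`c ≤ γ - 1`, and `ρ = c / (γ - 1)`. The ratio of the amplitudes follows from the convergence of
the total masses.
-/

section MonotoneLimits

variable {ι α β : Type*} [LinearOrder α] [TopologicalSpace α] [OrderTopology α]
  [DenselyOrdered α] [LinearOrder β] [TopologicalSpace β] [OrderTopology β]
  {l : Filter ι} {s : Set α} {x : α} {g : ι → α → β} {H : α → β} {κ : ι → α}

theorem tendsto_apply_of_antitoneOn [NoMaxOrder α] [NoMinOrder α] (hs : s ∈ 𝓝 x)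
    (hg : ∀ᶠ i in l, AntitoneOn (g i) s) (hlim : ∀ y ∈ s, Tendsto (g · y) l (𝓝 (H y)))
    (hH : ContinuousAt H x) (hκ : Tendsto κ l (𝓝 x)) :
    Tendsto (fun i => g i (κ i)) l (𝓝 (H x)) := by
  refine tendsto_order.2 ⟨fun b hb => ?_, fun b hb => ?_⟩
  · obtain ⟨y, ⟨hby, hys⟩, hxy⟩ := (((hH.eventually_const_lt hb).and hs).filter_mono
      nhdsWithin_le_nhds |>.and (self_mem_nhdsWithin (s := Ioi x))).exists
    filter_upwards [hg, (hlim y hys).eventually_const_lt hby, hκ.eventually hs,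
      hκ.eventually_lt_const hxy] with i hanti hbg hκs hκy
    exact hbg.trans_le (hanti hκs hys hκy.le)
  · obtain ⟨y, ⟨hby, hys⟩, hxy⟩ := (((hH.eventually_lt_const hb).and hs).filter_mono
      nhdsWithin_le_nhds |>.and (self_mem_nhdsWithin (s := Iio x))).exists
    filter_upwards [hg, (hlim y hys).eventually_lt_const hby, hκ.eventually hs,
      hκ.eventually_const_lt hxy] with i hanti hbg hκs hκy
    exact (hanti hys hκs hκy.le).trans_lt hbg

theorem tendsto_of_tendsto_apply_antitoneOn [NoMaxOrder α] [NoMinOrder α] (hs : s ∈ 𝓝 x)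
    (hg : ∀ᶠ i in l, AntitoneOn (g i) s) (hlim : ∀ y ∈ s, Tendsto (g · y) l (𝓝 (H y)))
    (hH : StrictAntiOn H s) (hκ : ∀ᶠ i in l, κ i ∈ s)
    (hgκ : Tendsto (fun i => g i (κ i)) l (𝓝 (H x))) : Tendsto κ l (𝓝 x) := by
  have hxs : x ∈ s := mem_of_mem_nhds hs
  refine tendsto_order.2 ⟨fun b hb => ?_, fun b hb => ?_⟩
  · obtain ⟨y, ⟨hby, hys⟩, hyx⟩ := (((eventually_gt_nhds hb).and hs).filter_mono
      nhdsWithin_le_nhds |>.and (self_mem_nhdsWithin (s := Iio x))).exists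
    filter_upwards [hg, hκ, hgκ.eventually_lt (hlim y hys) (hH hys hxs hyx)]
      with i hanti hκs hlt
    exact hby.trans (not_le.1 fun hκy => (hanti hκs hys hκy).not_gt hlt)
  · obtain ⟨y, ⟨hyb, hys⟩, hxy⟩ := (((eventually_lt_nhds hb).and hs).filter_mono
      nhdsWithin_le_nhds |>.and (self_mem_nhdsWithin (s := Ioi x))).exists
    filter_upwards [hg, hκ, (hlim y hys).eventually_lt hgκ (hH hxs hys hxy)]
      with i hanti hκs hlt
    exact (not_le.1 fun hyκ => (hanti hys hκs hyκ).not_gt hlt).trans hyb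

end MonotoneLimits

section LHopital

variable {f f' g g' : ℝ → ℝ} {a b b' c : ℝ}

theorem eventually_div_lt_of_mul_deriv_le (hf : ∀ᶠ x in 𝓝[>] a, HasDerivAt f (f' x) x)
    (hg : ∀ᶠ x in 𝓝[>] a, HasDerivAt g (g' x) x) (hgtop : Tendsto g (𝓝[>] a) atTop)
    (hb : ∀ᶠ x in 𝓝[>] a, b * g' x ≤ f' x) (hbb' : b < b') :
    ∀ᶠ x in 𝓝[>] a, f x / g x < b' := by
  obtain ⟨δ, hδ, hsub⟩ := mem_nhdsGT_iff_exists_Ioo_subset.1 (hf.and (hg.and hb))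
  have hderiv : ∀ x ∈ Ioo a δ, HasDerivAt (fun x => f x - b * g x) (f' x - b * g' x) x :=
    fun x hx => (hsub hx).1.sub ((hsub hx).2.1.const_mul b)
  have hmono : MonotoneOn (fun x => f x - b * g x) (Ioo a δ) := by
    refine monotoneOn_of_deriv_nonneg (convex_Ioo a δ) (HasDerivAt.continuousOn hderiv) ?_ ?_ <;>
      rw [interior_Ioo]
    · exact fun x hx => (hderiv x hx).differentiableAt.differentiableWithinAt
    · intro x hx
      rw [(hderiv x hx).deriv]
      exact sub_nonneg.2 (hsub hx).2.2
  obtain ⟨y, hay, hyδ⟩ := exists_between (mem_Ioi.1 hδ)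
  have hlim : Tendsto (fun x => b + (f y - b * g y) / g x) (𝓝[>] a) (𝓝 b) := by
    simpa using (hgtop.const_div_atTop (f y - b * g y)).const_add b
  filter_upwards [hlim.eventually_lt_const hbb', hgtop.eventually_gt_atTop 0,
    Ioo_mem_nhdsGT hay] with x hx hgx hxy
  refine lt_of_le_of_lt ?_ hx
  have hle : f x - b * g x ≤ f y - b * g y :=
    hmono ⟨hxy.1, hxy.2.trans hyδ⟩ ⟨hay, hyδ⟩ hxy.2.le
  rw [div_le_iff₀ hgx, add_mul, div_mul_cancel₀ _ hgx.ne']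
  linarith

theorem lhopital_atTop_nhdsGT (hf : ∀ᶠ x in 𝓝[>] a, HasDerivAt f (f' x) x)
    (hg : ∀ᶠ x in 𝓝[>] a, HasDerivAt g (g' x) x) (hg' : ∀ᶠ x in 𝓝[>] a, g' x < 0)
    (hgtop : Tendsto g (𝓝[>] a) atTop)
    (hlim : Tendsto (fun x => f' x / g' x) (𝓝[>] a) (𝓝 c)) :
    Tendsto (fun x => f x / g x) (𝓝[>] a) (𝓝 c) := by
  refine tendsto_order.2 ⟨fun b hb => ?_, fun b hb => ?_⟩
  · obtain ⟨d, hbd, hdc⟩ := exists_between hb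
    have hle : ∀ᶠ x in 𝓝[>] a, -d * g' x ≤ -f' x := by
      filter_upwards [hg', hlim.eventually_const_lt hdc] with x hneg hlt
      rw [lt_div_iff_of_neg hneg] at hlt
      linarith
    filter_upwards [eventually_div_lt_of_mul_deriv_le (hf.mono fun x hx => hx.neg) hg hgtop hle
      (neg_lt_neg hbd)] with x hx
    rwa [Pi.neg_apply, neg_div, neg_lt_neg_iff] at hx
  · obtain ⟨d, hcd, hdb⟩ := exists_between hb
    refine eventually_div_lt_of_mul_deriv_le hf hg hgtop ?_ hdb
    filter_upwards [hg', hlim.eventually_lt_const hcd] with x hneg hlt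
    exact ((div_lt_iff_of_neg hneg).1 hlt).le

end LHopital

/-- Regular variation at `0⁺` with index `ρ`. Positivity of `f` is not part of the definition. -/
def IsRegularlyVaryingAtZero (f : ℝ → ℝ) (ρ : ℝ) : Prop :=
  ∀ x : ℝ, 0 < x → Tendsto (fun t => f (t * x) / f t) (𝓝[>] 0) (𝓝 (x ^ ρ))

namespace IsRegularlyVaryingAtZero

variable {f : ℝ → ℝ} {ρ : ℝ}

theorem pos_of_monotoneOn (hf : IsRegularlyVaryingAtZero f ρ) (hmono : MonotoneOn f (Ioi 0))
    (hnonneg : ∀ u, 0 < u → 0 ≤ f u) {u : ℝ} (hu : 0 < u) : 0 < f u := by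
  refine (hnonneg u hu).lt_of_ne fun hfu => ?_
  have hzero : (fun t => f (t * 1) / f t) =ᶠ[𝓝[>] 0] fun _ => 0 := by
    filter_upwards [Ioo_mem_nhdsGT hu] with t ht
    rw [le_antisymm (hfu ▸ hmono ht.1 hu ht.2.le) (hnonneg t ht.1), div_zero]
  simpa using tendsto_nhds_unique ((hf 1 one_pos).congr' hzero) tendsto_const_nhds

theorem neg_inv (hf : IsRegularlyVaryingAtZero f ρ) :
    IsRegularlyVaryingAtZero (fun u => -(f u)⁻¹) (-ρ) := by
  intro x hx
  rw [Real.rpow_neg hx.le]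
  refine ((hf x hx).inv₀ (Real.rpow_pos_of_pos hx ρ).ne').congr fun t => ?_
  rw [neg_div_neg_eq, inv_div_inv, inv_div]

/-- The direct half of Karamata's theorem for a divergent integral. -/
theorem of_hasDerivAt {F : ℝ → ℝ} (hf : IsRegularlyVaryingAtZero f ρ)
    (hF : ∀ u, 0 < u → HasDerivAt F (f u) u) (hneg : ∀ u, 0 < u → f u < 0)
    (hFtop : Tendsto F (𝓝[>] 0) atTop) : IsRegularlyVaryingAtZero F (ρ + 1) := by
  intro x hx
  have hpos : ∀ᶠ u : ℝ in 𝓝[>] 0, 0 < u := self_mem_nhdsWithin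
  refine lhopital_atTop_nhdsGT (f' := fun u => f (u * x) * x) (hpos.mono fun u hu => ?_)
    (hpos.mono hF) (hpos.mono hneg) hFtop ?_
  · have hmul : HasDerivAt (fun t => t * x) x u := by
      simpa using (hasDerivAt_id u).mul_const x
    exact (hF (u * x) (mul_pos hu hx)).comp u hmul
  · rw [Real.rpow_add_one hx.ne']
    exact ((hf x hx).mul_const x).congr fun u => by ring

variable {ι : Type*} {l : Filter ι} {v w : ι → ℝ}

theorem eventually_antitoneOn_dilation (hanti : AntitoneOn f (Ioi 0))
    (hpos : ∀ᶠ u in 𝓝[>] 0, 0 < f u) :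
    ∀ᶠ u in 𝓝[>] 0, AntitoneOn (fun x => f (u * x) / f u) (Ioi 0) := by
  filter_upwards [hpos, self_mem_nhdsWithin] with u hfu hu x hx y hy hxy
  have hux : u * x ∈ Ioi 0 := mul_pos (mem_Ioi.1 hu) (mem_Ioi.1 hx)
  have huy : u * y ∈ Ioi 0 := mul_pos (mem_Ioi.1 hu) (mem_Ioi.1 hy)
  exact div_le_div_of_nonneg_right (hanti hux huy (mul_le_mul_of_nonneg_left hxy (le_of_lt hu)))
    hfu.le

theorem tendsto_apply_div_apply (hf : IsRegularlyVaryingAtZero f ρ)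
    (hanti : AntitoneOn f (Ioi 0)) (hpos : ∀ᶠ u in 𝓝[>] 0, 0 < f u)
    (hv : Tendsto v l (𝓝[>] 0)) {x : ℝ} (hx : 0 < x)
    (hwv : Tendsto (fun i => w i / v i) l (𝓝 x)) :
    Tendsto (fun i => f (w i) / f (v i)) l (𝓝 (x ^ ρ)) := by
  have h := tendsto_apply_of_antitoneOn (H := fun y => y ^ ρ) (Ioi_mem_nhds hx)
    (hv.eventually (eventually_antitoneOn_dilation hanti hpos)) (fun y hy => (hf y hy).comp hv)
    (Real.continuousAt_rpow_const _ _ (Or.inl hx.ne')) hwv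
  refine h.congr' ?_
  filter_upwards [hv.eventually self_mem_nhdsWithin] with i hi
  rw [mul_div_cancel₀ _ (ne_of_gt hi)]

theorem tendsto_div_of_tendsto_apply_div_apply (hf : IsRegularlyVaryingAtZero f ρ) (hρ : ρ < 0)
    (hanti : AntitoneOn f (Ioi 0)) (hpos : ∀ᶠ u in 𝓝[>] 0, 0 < f u)
    (hv : Tendsto v l (𝓝[>] 0)) (hw : ∀ᶠ i in l, 0 < w i) {y : ℝ} (hy : 0 < y)
    (hwv : Tendsto (fun i => f (w i) / f (v i)) l (𝓝 y)) :
    Tendsto (fun i => w i / v i) l (𝓝 (y ^ ρ⁻¹)) := by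
  have hvpos : ∀ᶠ i in l, 0 < v i := hv.eventually self_mem_nhdsWithin
  refine tendsto_of_tendsto_apply_antitoneOn (H := fun x => x ^ ρ)
    (Ioi_mem_nhds (Real.rpow_pos_of_pos hy _))
    (hv.eventually (eventually_antitoneOn_dilation hanti hpos)) (fun x hx => (hf x hx).comp hv)
    (fun x hx x' _ hxx' => Real.rpow_lt_rpow_of_neg hx hxx' hρ) ?_ ?_
  · filter_upwards [hvpos, hw] with i hvi hwi using div_pos hwi hvi
  · rw [Real.rpow_inv_rpow hy.le hρ.ne]
    refine hwv.congr' ?_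
    filter_upwards [hvpos] with i hvi
    rw [mul_div_cancel₀ _ hvi.ne']

end IsRegularlyVaryingAtZero

section BranchingMechanism

/-- The critical branching mechanism `u ↦ βu² + ∫ (e^{-ux} - 1 + ux) π(dx)` with Gaussian
coefficient `β` and Lévy measure `π` on `(0, ∞)`. -/
def branchingMechanism (β : ℝ) (π : Measure ℝ) (u : ℝ) : ℝ :=
  β * u ^ 2 + ∫ x in Ioi (0 : ℝ), (Real.exp (-(u * x)) - 1 + u * x) ∂π

theorem exp_neg_sub_one_add_nonneg (y : ℝ) : 0 ≤ Real.exp (-y) - 1 + y := by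
  linarith [Real.add_one_le_exp (-y)]

theorem exp_neg_sub_one_add_le_min {y : ℝ} (hy : 0 ≤ y) :
    Real.exp (-y) - 1 + y ≤ min y (y ^ 2) := by
  have hexp : Real.exp (-y) ≤ 1 := Real.exp_le_one_iff.2 (neg_nonpos.2 hy)
  have hlin : Real.exp (-y) - 1 + y ≤ y := by linarith
  refine le_min hlin ?_
  rcases le_total y 1 with hy1 | hy1
  · have hsq := Real.abs_exp_sub_one_sub_id_le (x := -y) (by rwa [abs_neg, abs_of_nonneg hy])
    linarith [(abs_le.1 hsq).2, neg_sq y]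
  · nlinarith

theorem exp_neg_sub_one_add_monotoneOn :
    MonotoneOn (fun y : ℝ => Real.exp (-y) - 1 + y) (Ici 0) := by
  intro y (hy : 0 ≤ y) z _ hyz
  have htangent : Real.exp (-y) * (y - z + 1) ≤ Real.exp (-z) := by
    rw [show -z = -y + (y - z) by ring, Real.exp_add]
    exact mul_le_mul_of_nonneg_left (Real.add_one_le_exp _) (Real.exp_pos _).le
  have hexp : Real.exp (-y) ≤ 1 := Real.exp_le_one_iff.2 (neg_nonpos.2 hy)
  change Real.exp (-y) - 1 + y ≤ Real.exp (-z) - 1 + z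
  nlinarith

theorem norm_exp_neg_mul_sub_one_add_le {u U x : ℝ} (hu : 0 ≤ u) (huU : u ≤ U) (hx : 0 ≤ x) :
    ‖Real.exp (-(u * x)) - 1 + u * x‖ ≤ max U (U ^ 2) * min x (x ^ 2) := by
  rw [Real.norm_of_nonneg (exp_neg_sub_one_add_nonneg _),
    mul_min_of_nonneg _ _ (le_max_of_le_left (hu.trans huU))]
  refine (exp_neg_sub_one_add_le_min (mul_nonneg hu hx)).trans (min_le_min ?_ ?_)
  · gcongr
    exact huU.trans (le_max_left _ _)
  · rw [mul_pow]
    gcongr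
    exact (pow_le_pow_left₀ hu huU 2).trans (le_max_right _ _)

variable {β : ℝ} {π : Measure ℝ}

theorem integrableOn_min_sq (hπ : ∫⁻ x in Ioi (0 : ℝ), ENNReal.ofReal (min x (x ^ 2)) ∂π < ⊤) :
    IntegrableOn (fun x : ℝ => min x (x ^ 2)) (Ioi 0) π := by
  refine (lintegral_ofReal_ne_top_iff_integrable ?_ ?_).1 hπ.ne
  · exact Continuous.aestronglyMeasurable (by fun_prop)
  · filter_upwards [ae_restrict_mem measurableSet_Ioi] with x hx
    exact le_min (le_of_lt hx) (sq_nonneg x)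

theorem integrableOn_exp_neg_mul_sub_one_add
    (hπ : IntegrableOn (fun x : ℝ => min x (x ^ 2)) (Ioi 0) π) {u : ℝ} (hu : 0 ≤ u) :
    IntegrableOn (fun x => Real.exp (-(u * x)) - 1 + u * x) (Ioi 0) π := by
  refine (hπ.const_mul (max u (u ^ 2))).mono' (Continuous.aestronglyMeasurable (by fun_prop)) ?_
  filter_upwards [ae_restrict_mem measurableSet_Ioi] with x hx
  exact norm_exp_neg_mul_sub_one_add_le hu le_rfl (le_of_lt hx)

theorem branchingMechanism_nonneg (hβ : 0 ≤ β) (u : ℝ) : 0 ≤ branchingMechanism β π u :=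
  add_nonneg (mul_nonneg hβ (sq_nonneg u))
    (integral_nonneg fun _ => exp_neg_sub_one_add_nonneg _)

theorem monotoneOn_branchingMechanism (hβ : 0 ≤ β)
    (hπ : IntegrableOn (fun x : ℝ => min x (x ^ 2)) (Ioi 0) π) :
    MonotoneOn (branchingMechanism β π) (Ici 0) := by
  intro u (hu : 0 ≤ u) v (hv : 0 ≤ v) huv
  refine add_le_add (by gcongr) ?_
  refine setIntegral_mono_on (integrableOn_exp_neg_mul_sub_one_add hπ hu)
    (integrableOn_exp_neg_mul_sub_one_add hπ hv) measurableSet_Ioi fun x hx => ?_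
  have hx : 0 ≤ x := le_of_lt hx
  exact exp_neg_sub_one_add_monotoneOn (mul_nonneg hu hx) (mul_nonneg hv hx) (by gcongr)

theorem continuousOn_branchingMechanism
    (hπ : IntegrableOn (fun x : ℝ => min x (x ^ 2)) (Ioi 0) π) :
    ContinuousOn (branchingMechanism β π) (Ioi 0) := by
  intro u (hu : 0 < u)
  refine ContinuousAt.continuousWithinAt (ContinuousAt.add (by fun_prop) ?_)
  refine continuousAt_of_dominated
    (bound := fun x => max (2 * u) ((2 * u) ^ 2) * min x (x ^ 2)) ?_ ?_ (hπ.const_mul _) ?_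
  · exact Eventually.of_forall fun v => Continuous.aestronglyMeasurable (by fun_prop)
  · filter_upwards [Ioo_mem_nhds hu (by linarith : u < 2 * u)] with v hv
    filter_upwards [ae_restrict_mem measurableSet_Ioi] with x hx
    exact norm_exp_neg_mul_sub_one_add_le hv.1.le hv.2.le (le_of_lt hx)
  · exact Eventually.of_forall fun x => by fun_prop

end BranchingMechanism

/-- The properties of a critical branching mechanism that drive the asymptotics: continuity and
positivity on `(0, ∞)`, and regular variation at `0` with an index `γ > 1`. -/
structure IsRegularMechanism (Ψ : ℝ → ℝ) (γ : ℝ) : Prop where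
  continuousOn : ContinuousOn Ψ (Ioi 0)
  pos : ∀ u, 0 < u → 0 < Ψ u
  one_lt : 1 < γ
  regularlyVarying : IsRegularlyVaryingAtZero Ψ γ

theorem IsRegularMechanism.of_eq_branchingMechanism {Ψ : ℝ → ℝ} {β γ : ℝ} {π : Measure ℝ}
    (hβ : 0 ≤ β) (hπ : IntegrableOn (fun x : ℝ => min x (x ^ 2)) (Ioi 0) π)
    (hΨ : ∀ u, 0 < u → Ψ u = branchingMechanism β π u) (hγ : 1 < γ)
    (hreg : IsRegularlyVaryingAtZero Ψ γ) : IsRegularMechanism Ψ γ where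
  continuousOn := (continuousOn_branchingMechanism hπ).congr hΨ
  pos u hu := by
    refine hreg.pos_of_monotoneOn ?_ (fun v hv => ?_) hu
    · exact ((monotoneOn_branchingMechanism hβ hπ).mono Ioi_subset_Ici_self).congr
        fun v hv => (hΨ v hv).symm
    · exact (hΨ v hv).symm ▸ branchingMechanism_nonneg hβ v
  one_lt := hγ
  regularlyVarying := hreg

section Flow

variable {Ψ : ℝ → ℝ}

/-- A positive solution on `(0, ∞)` of the autonomous equation `y' = -Ψ(y)`. -/
structure IsFlowLine (Ψ y : ℝ → ℝ) : Prop where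
  pos : ∀ t, 0 < t → 0 < y t
  hasDerivAt : ∀ t, 0 < t → HasDerivAt y (-Ψ (y t)) t

/-- The time the flow `y' = -Ψ(y)` takes to descend from `1` to `u`, negative for `u > 1`. -/
def flowTime (Ψ : ℝ → ℝ) (u : ℝ) : ℝ := ∫ v in u..1, (Ψ v)⁻¹

theorem hasDerivAt_flowTime (hc : ContinuousOn Ψ (Ioi 0)) (hpos : ∀ u, 0 < u → 0 < Ψ u) {u : ℝ}
    (hu : 0 < u) : HasDerivAt (flowTime Ψ) (-(Ψ u)⁻¹) u := by
  have hinv : ContinuousOn (fun v => (Ψ v)⁻¹) (Ioi 0) := hc.inv₀ fun v hv => (hpos v hv).ne'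
  refine intervalIntegral.integral_hasDerivAt_left ?_
    (hinv.stronglyMeasurableAtFilter isOpen_Ioi u hu) (hinv.continuousAt (Ioi_mem_nhds hu))
  exact (hinv.mono fun v hv => (lt_min hu one_pos).trans_le hv.1).intervalIntegrable

theorem strictAntiOn_flowTime (hc : ContinuousOn Ψ (Ioi 0)) (hpos : ∀ u, 0 < u → 0 < Ψ u) :
    StrictAntiOn (flowTime Ψ) (Ioi 0) := by
  refine strictAntiOn_of_deriv_neg (convex_Ioi 0)
    (HasDerivAt.continuousOn fun u hu => hasDerivAt_flowTime hc hpos hu) fun u hu => ?_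
  rw [interior_Ioi] at hu
  rw [(hasDerivAt_flowTime hc hpos hu).deriv]
  exact neg_neg_of_pos (inv_pos.2 (hpos u hu))

namespace IsFlowLine

variable {y : ℝ → ℝ}

theorem flowTime_sub (hy : IsFlowLine Ψ y) (hc : ContinuousOn Ψ (Ioi 0))
    (hpos : ∀ u, 0 < u → 0 < Ψ u) {s t : ℝ} (hs : 0 < s) (ht : 0 < t) :
    flowTime Ψ (y t) - flowTime Ψ (y s) = t - s := by
  have hderiv : ∀ r ∈ Ioi (0 : ℝ), HasDerivAt (fun r => flowTime Ψ (y r) - r) 0 r := by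
    intro r hr
    have hsub := ((hasDerivAt_flowTime hc hpos (hy.pos r hr)).comp r (hy.hasDerivAt r hr)).sub
      (hasDerivAt_id r)
    rwa [neg_mul_neg, inv_mul_cancel₀ (hpos _ (hy.pos r hr)).ne', sub_self] at hsub
  have hconst : flowTime Ψ (y t) - t = flowTime Ψ (y s) - s :=
    isOpen_Ioi.is_const_of_deriv_eq_zero isPreconnected_Ioi
      (fun r hr => (hderiv r hr).differentiableAt.differentiableWithinAt)
      (fun r hr => (hderiv r hr).deriv) ht hs
  linarith

theorem tendsto_nhdsGT_zero (hy : IsFlowLine Ψ y) (hc : ContinuousOn Ψ (Ioi 0))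
    (hpos : ∀ u, 0 < u → 0 < Ψ u) : Tendsto y atTop (𝓝[>] 0) := by
  refine tendsto_nhdsWithin_iff.2 ⟨tendsto_order.2 ⟨fun b hb => ?_, fun ε hε => ?_⟩, ?_⟩
  · filter_upwards [eventually_gt_atTop 0] with t ht using hb.trans (hy.pos t ht)
  · filter_upwards [eventually_gt_atTop 0,
      eventually_gt_atTop (1 + (flowTime Ψ ε - flowTime Ψ (y 1)))] with t ht hlate
    refine ((strictAntiOn_flowTime hc hpos).lt_iff_gt hε (hy.pos t ht)).1 ?_
    linarith [hy.flowTime_sub hc hpos one_pos ht]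
  · filter_upwards [eventually_gt_atTop 0] with t ht using hy.pos t ht

theorem tendsto_flowTime_atTop (hy : IsFlowLine Ψ y) (hc : ContinuousOn Ψ (Ioi 0))
    (hpos : ∀ u, 0 < u → 0 < Ψ u) : Tendsto (flowTime Ψ) (𝓝[>] 0) atTop := by
  refine tendsto_atTop.2 fun B => ?_
  obtain ⟨t, ht, hB⟩ := ((eventually_gt_atTop (0 : ℝ)).and
    (eventually_gt_atTop (1 + (B - flowTime Ψ (y 1))))).exists
  filter_upwards [Ioo_mem_nhdsGT (hy.pos t ht)] with u hu
  have hle := (strictAntiOn_flowTime hc hpos).antitoneOn hu.1 (hy.pos t ht) hu.2.le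
  linarith [hy.flowTime_sub hc hpos one_pos ht]

theorem tendsto_flowTime_div (hy : IsFlowLine Ψ y) (hc : ContinuousOn Ψ (Ioi 0))
    (hpos : ∀ u, 0 < u → 0 < Ψ u) : Tendsto (fun s => flowTime Ψ (y s) / s) atTop (𝓝 1) := by
  have hlim : Tendsto (fun s => 1 + (flowTime Ψ (y 1) - 1) / s) atTop (𝓝 1) := by
    simpa using (tendsto_id.const_div_atTop (flowTime Ψ (y 1) - 1)).const_add 1
  refine hlim.congr' ?_
  filter_upwards [eventually_gt_atTop 0] with s hs
  rw [eq_div_iff hs.ne', add_mul, div_mul_cancel₀ _ hs.ne', one_mul]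
  linarith [hy.flowTime_sub hc hpos one_pos hs]

end IsFlowLine

theorem IsRegularMechanism.regularlyVarying_flowTime {γ : ℝ} (hΨ : IsRegularMechanism Ψ γ)
    (htop : Tendsto (flowTime Ψ) (𝓝[>] 0) atTop) :
    IsRegularlyVaryingAtZero (flowTime Ψ) (1 - γ) := by
  rw [sub_eq_neg_add]
  exact hΨ.regularlyVarying.neg_inv.of_hasDerivAt
    (fun u hu => hasDerivAt_flowTime hΨ.continuousOn hΨ.pos hu)
    (fun u hu => neg_neg_of_pos (inv_pos.2 (hΨ.pos u hu))) htop

end Flow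

section LaplaceExponent

theorem integral_lt_integral_of_ae_lt {α : Type*} [MeasurableSpace α] {μ : Measure α} [NeZero μ]
    {f g : α → ℝ} (hf : Integrable f μ) (hg : Integrable g μ) (hfg : ∀ᵐ x ∂μ, f x < g x) :
    ∫ x, f x ∂μ < ∫ x, g x ∂μ := by
  have hle : f ≤ᵐ[μ] g := hfg.mono fun _ => le_of_lt
  refine (integral_mono_ae hf hg hle).lt_of_ne fun heq => ?_
  obtain ⟨x, hlt, hx⟩ := (hfg.and ((integral_eq_iff_of_ae_le hf hg hle).1 heq)).exists
  exact hlt.ne hx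

/-- The Laplace exponent `q ↦ ∫ (1 - e^{-qx}) μ(dx)` of a measure `μ` on `(0, ∞)`. -/
def laplaceExponent (μ : Measure ℝ) (q : ℝ) : ℝ :=
  ∫ x in Ioi (0 : ℝ), (1 - Real.exp (-(q * x))) ∂μ

theorem abs_one_sub_exp_neg_le {y : ℝ} (hy : 0 ≤ y) : |1 - Real.exp (-y)| ≤ 1 := by
  have hle : Real.exp (-y) ≤ 1 := Real.exp_le_one_iff.2 (neg_nonpos.2 hy)
  rw [abs_of_nonneg (sub_nonneg.2 hle)]
  linarith [Real.exp_pos (-y)]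

theorem ae_norm_one_sub_exp_neg_mul_le (μ : Measure ℝ) {q : ℝ} (hq : 0 ≤ q) :
    ∀ᵐ x ∂μ.restrict (Ioi 0), ‖1 - Real.exp (-(q * x))‖ ≤ 1 := by
  filter_upwards [ae_restrict_mem measurableSet_Ioi] with x hx
  exact abs_one_sub_exp_neg_le (mul_nonneg hq (le_of_lt hx))

@[simp]
theorem laplaceExponent_zero (μ : Measure ℝ) : laplaceExponent μ 0 = 0 := by
  simp [laplaceExponent]

variable {μ : Measure ℝ} [IsFiniteMeasure μ]

theorem integrableOn_one_sub_exp_neg_mul {q : ℝ} (hq : 0 ≤ q) :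
    IntegrableOn (fun x => 1 - Real.exp (-(q * x))) (Ioi 0) μ :=
  (integrable_const 1).mono' (Continuous.aestronglyMeasurable (by fun_prop))
    (ae_norm_one_sub_exp_neg_mul_le μ hq)

theorem strictMonoOn_laplaceExponent (hμ : μ (Ioi 0) ≠ 0) :
    StrictMonoOn (laplaceExponent μ) (Ici 0) := by
  intro p (hp : 0 ≤ p) q (hq : 0 ≤ q) hpq
  have : NeZero (μ.restrict (Ioi 0)) := ⟨by rwa [Ne, Measure.restrict_eq_zero]⟩
  refine integral_lt_integral_of_ae_lt (integrableOn_one_sub_exp_neg_mul hp)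
    (integrableOn_one_sub_exp_neg_mul hq) ?_
  filter_upwards [ae_restrict_mem measurableSet_Ioi] with x hx
  exact sub_lt_sub_left (Real.exp_lt_exp.2 (neg_lt_neg (mul_lt_mul_of_pos_right hpq hx))) 1

theorem laplaceExponent_pos (hμ : μ (Ioi 0) ≠ 0) {q : ℝ} (hq : 0 < q) :
    0 < laplaceExponent μ q :=
  laplaceExponent_zero μ ▸ strictMonoOn_laplaceExponent hμ self_mem_Ici hq.le hq

theorem mass_pos (hμ : μ (Ioi 0) ≠ 0) : 0 < μ.real (Ioi 0) :=
  ENNReal.toReal_pos hμ (measure_ne_top μ _)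

theorem laplaceExponent_lt_mass (hμ : μ (Ioi 0) ≠ 0) {q : ℝ} (hq : 0 ≤ q) :
    laplaceExponent μ q < μ.real (Ioi 0) := by
  have : NeZero (μ.restrict (Ioi 0)) := ⟨by rwa [Ne, Measure.restrict_eq_zero]⟩
  rw [← mul_one (μ.real (Ioi 0)), ← smul_eq_mul, ← setIntegral_const]
  refine integral_lt_integral_of_ae_lt (integrableOn_one_sub_exp_neg_mul hq)
    (integrable_const _) (Eventually.of_forall fun x => ?_)
  exact sub_lt_self 1 (Real.exp_pos _)

theorem continuousOn_laplaceExponent : ContinuousOn (laplaceExponent μ) (Ici 0) :=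
  continuousOn_of_dominated (bound := fun _ => 1)
    (fun _ _ => Continuous.aestronglyMeasurable (by fun_prop))
    (fun _ hq => ae_norm_one_sub_exp_neg_mul_le μ hq) (integrable_const _)
    (Eventually.of_forall fun x => by fun_prop)

theorem tendsto_laplaceExponent_atTop :
    Tendsto (laplaceExponent μ) atTop (𝓝 (μ.real (Ioi 0))) := by
  rw [← mul_one (μ.real (Ioi 0)), ← smul_eq_mul, ← setIntegral_const]
  refine tendsto_integral_filter_of_dominated_convergence (fun _ => 1)
    (Eventually.of_forall fun _ => Continuous.aestronglyMeasurable (by fun_prop)) ?_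
    (integrable_const _) ?_
  · filter_upwards [eventually_ge_atTop 0] with q hq using ae_norm_one_sub_exp_neg_mul_le μ hq
  · filter_upwards [ae_restrict_mem measurableSet_Ioi] with x hx
    simpa using (Real.tendsto_exp_neg_atTop_nhds_zero.comp
      (tendsto_id.atTop_mul_const (mem_Ioi.1 hx))).const_sub 1

theorem mul_laplaceExponent_le {p q : ℝ} (hp : 0 ≤ p) (hq : 0 ≤ q) (hq1 : q ≤ 1) :
    q * laplaceExponent μ p ≤ laplaceExponent μ (q * p) := by
  rw [laplaceExponent, ← integral_const_mul]
  refine integral_mono ((integrableOn_one_sub_exp_neg_mul hp).const_mul q)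
    (integrableOn_one_sub_exp_neg_mul (mul_nonneg hq hp)) fun x => ?_
  have hconv : Real.exp (q * -(p * x)) ≤ q * Real.exp (-(p * x)) + (1 - q) := by
    simpa using convexOn_exp.2 (mem_univ (-(p * x))) (mem_univ 0) hq (sub_nonneg.2 hq1)
      (add_sub_cancel q 1)
  have hexp : -(q * p * x) = q * -(p * x) := by ring
  dsimp only
  rw [hexp]
  linarith

end LaplaceExponent

section ScalingProfile

/-- The function `(φ/m)^{1-γ} - 1`, where `φ` is the Laplace exponent and `m` the mass of `μ`. It
is the limit of the rescaled delays when `μ` is the scaling limit. -/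
def scalingProfile (γ : ℝ) (μ : Measure ℝ) (q : ℝ) : ℝ :=
  (laplaceExponent μ q / μ.real (Ioi 0)) ^ (1 - γ) - 1

variable {γ : ℝ} {μ : Measure ℝ} [IsFiniteMeasure μ]

theorem strictMonoOn_laplaceExponent_div_mass (hμ : μ (Ioi 0) ≠ 0) :
    StrictMonoOn (fun q => laplaceExponent μ q / μ.real (Ioi 0)) (Ici 0) :=
  fun _ hp _ hq hpq =>
    div_lt_div_of_pos_right (strictMonoOn_laplaceExponent hμ hp hq hpq) (mass_pos hμ)

theorem laplaceExponent_div_mass_mem_Ioo (hμ : μ (Ioi 0) ≠ 0) {q : ℝ} (hq : 0 < q) :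
    laplaceExponent μ q / μ.real (Ioi 0) ∈ Ioo 0 1 :=
  ⟨div_pos (laplaceExponent_pos hμ hq) (mass_pos hμ),
    (div_lt_one (mass_pos hμ)).2 (laplaceExponent_lt_mass hμ hq.le)⟩

theorem scalingProfile_pos (hγ : 1 < γ) (hμ : μ (Ioi 0) ≠ 0) {q : ℝ} (hq : 0 < q) :
    0 < scalingProfile γ μ q :=
  have hmem := laplaceExponent_div_mass_mem_Ioo hμ hq
  sub_pos.2 (Real.one_lt_rpow_of_pos_of_lt_one_of_neg hmem.1 hmem.2 (sub_neg.2 hγ))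

theorem strictAntiOn_scalingProfile (hγ : 1 < γ) (hμ : μ (Ioi 0) ≠ 0) :
    StrictAntiOn (scalingProfile γ μ) (Ioi 0) :=
  fun _ hp _ hq hpq => sub_lt_sub_right (Real.rpow_lt_rpow_of_neg
    (laplaceExponent_div_mass_mem_Ioo hμ hp).1
    (strictMonoOn_laplaceExponent_div_mass hμ (Ioi_subset_Ici_self hp)
      (Ioi_subset_Ici_self hq) hpq) (sub_neg.2 hγ)) 1

theorem continuousOn_scalingProfile (hμ : μ (Ioi 0) ≠ 0) :
    ContinuousOn (scalingProfile γ μ) (Ioi 0) :=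
  (((continuousOn_laplaceExponent.mono Ioi_subset_Ici_self).div_const _).rpow_const
    fun _ hq => Or.inl (laplaceExponent_div_mass_mem_Ioo hμ hq).1.ne').sub continuousOn_const

theorem tendsto_scalingProfile_atTop (hμ : μ (Ioi 0) ≠ 0) :
    Tendsto (scalingProfile γ μ) atTop (𝓝 0) := by
  have hdiv : Tendsto (fun q => laplaceExponent μ q / μ.real (Ioi 0)) atTop (𝓝 1) := by
    simpa [(mass_pos hμ).ne'] using
      (tendsto_laplaceExponent_atTop (μ := μ)).div_const (μ.real (Ioi 0))
  have hlim := (hdiv.rpow_const (p := 1 - γ) (Or.inl one_ne_zero)).sub_const 1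
  rwa [Real.one_rpow, sub_self] at hlim

theorem tendsto_scalingProfile_nhdsGT_zero (hγ : 1 < γ) (hμ : μ (Ioi 0) ≠ 0) :
    Tendsto (scalingProfile γ μ) (𝓝[>] 0) atTop := by
  have hzero : Tendsto (laplaceExponent μ) (𝓝[>] 0) (𝓝 0) := by
    simpa using (continuousOn_laplaceExponent (μ := μ) 0 self_mem_Ici).tendsto.mono_left
      (nhdsWithin_mono 0 Ioi_subset_Ici_self)
  have hdiv : Tendsto (fun q => laplaceExponent μ q / μ.real (Ioi 0)) (𝓝[>] 0) (𝓝[>] 0) := by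
    refine tendsto_nhdsWithin_iff.2 ⟨by simpa using hzero.div_const (μ.real (Ioi 0)), ?_⟩
    filter_upwards [self_mem_nhdsWithin] with q hq
    exact (laplaceExponent_div_mass_mem_Ioo hμ hq).1
  exact tendsto_atTop_add_const_right _ (-1)
    ((tendsto_rpow_neg_nhdsGT_zero (sub_neg.2 hγ)).comp hdiv)

theorem surjOn_scalingProfile (hγ : 1 < γ) (hμ : μ (Ioi 0) ≠ 0) :
    SurjOn (scalingProfile γ μ) (Ioi 0) (Ioi 0) :=
  isPreconnected_Ioi.intermediate_value_Ioi (le_principal_iff.2 (Ioi_mem_atTop 0))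
    (le_principal_iff.2 self_mem_nhdsWithin) (continuousOn_scalingProfile hμ)
    (tendsto_scalingProfile_atTop hμ) (tendsto_scalingProfile_nhdsGT_zero hγ hμ)

theorem one_add_scalingProfile_le (hγ : 1 < γ) (hμ : μ (Ioi 0) ≠ 0) {q : ℝ} (hq : 0 < q)
    (hq1 : q ≤ 1) : 1 + scalingProfile γ μ q ≤ q ^ (1 - γ) * (1 + scalingProfile γ μ 1) := by
  have hone := (laplaceExponent_div_mass_mem_Ioo hμ one_pos).1
  have hle : q * (laplaceExponent μ 1 / μ.real (Ioi 0)) ≤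
      laplaceExponent μ q / μ.real (Ioi 0) := by
    rw [← mul_div_assoc]
    gcongr
    simpa using mul_laplaceExponent_le (μ := μ) zero_le_one hq.le hq1
  rw [scalingProfile, scalingProfile, add_sub_cancel, add_sub_cancel,
    ← Real.mul_rpow hq.le hone.le]
  exact Real.rpow_le_rpow_of_nonpos (mul_pos hq hone) hle (sub_nonpos.2 hγ.le)

end ScalingProfile

section PowerLaws

theorem le_of_mul_rpow_neg_le {C D c d : ℝ} (hC : 0 < C)
    (hle : ∀ᶠ q : ℝ in 𝓝[>] 0, C * q ^ (-c) ≤ D * q ^ (-d)) : c ≤ d := by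
  by_contra! hdc
  have htop : Tendsto (fun q : ℝ => C * q ^ (d - c)) (𝓝[>] 0) atTop :=
    (tendsto_rpow_neg_nhdsGT_zero (sub_neg.2 hdc)).const_mul_atTop hC
  obtain ⟨q, ⟨hDq, hq⟩, hq0⟩ := (((htop.eventually_gt_atTop D).and hle).and
    (self_mem_nhdsWithin (s := Ioi 0))).exists
  have hpow : 0 < q ^ (-d) := Real.rpow_pos_of_pos hq0 _
  have hsplit : q ^ (-c) = q ^ (d - c) * q ^ (-d) := by
    rw [← Real.rpow_add hq0]
    ring_nf
  rw [hsplit, ← mul_assoc] at hq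
  exact hDq.not_ge (le_of_mul_le_mul_right hq hpow)

theorem exists_eq_rpow_of_map_mul {T : ℝ → ℝ} (hpos : ∀ q, 0 < q → 0 < T q)
    (hcont : ContinuousOn T (Ioi 0)) (hmul : ∀ p q, 0 < p → 0 < q → T (p * q) = T p * T q) :
    ∃ c : ℝ, ∀ q, 0 < q → T q = q ^ c := by
  have hne : ∀ x, T (Real.exp x) ≠ 0 := fun x => (hpos _ (Real.exp_pos x)).ne'
  let L : ℝ →+ ℝ := AddMonoidHom.mk' (fun x => Real.log (T (Real.exp x))) fun x y => by
    rw [Real.exp_add, hmul _ _ (Real.exp_pos x) (Real.exp_pos y), Real.log_mul (hne x) (hne y)]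
  have hL : Continuous L :=
    (hcont.comp_continuous Real.continuous_exp Real.exp_pos).log hne
  refine ⟨L 1, fun q hq => ?_⟩
  have hlin : L (Real.log q) = Real.log q * L 1 := by
    simpa using (L.toRealLinearMap hL).map_smul (Real.log q) 1
  have hlog : L (Real.log q) = Real.log (T q) := by
    simp only [L, AddMonoidHom.mk'_apply, Real.exp_log hq]
  rw [Real.rpow_def_of_pos hq, ← hlin, hlog, Real.exp_log (hpos q hq)]

variable {τ lam h : ℝ → ℝ}

/-- The functions `p ↦ τ (p * lam s) / s` converge to `h` and take at `q * lam (s * t) / lam s`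
values converging to `t * h q`, so this argument converges to `r`. -/
theorem tendsto_div_of_tendsto_rescaled (hτ : AntitoneOn τ (Ioi 0))
    (hlam : ∀ s, 0 < s → 0 < lam s) (hanti : StrictAntiOn h (Ioi 0))
    (hlim : ∀ q, 0 < q → Tendsto (fun s => τ (q * lam s) / s) atTop (𝓝 (h q)))
    {t q r : ℝ} (ht : 0 < t) (hq : 0 < q) (hr : 0 < r) (hrq : h r = t * h q) :
    Tendsto (fun s => lam (s * t) / lam s) atTop (𝓝 (r / q)) := by
  suffices hκ : Tendsto (fun s => q * (lam (s * t) / lam s)) atTop (𝓝 r) from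
    (hκ.div_const q).congr fun s => mul_div_cancel_left₀ _ hq.ne'
  refine tendsto_of_tendsto_apply_antitoneOn (g := fun s p => τ (p * lam s) / s)
    (Ioi_mem_nhds hr) ?_ hlim hanti ?_ ?_
  · filter_upwards [eventually_gt_atTop 0] with s hs p hp p' hp' hpp'
    have hls := hlam s hs
    exact div_le_div_of_nonneg_right (hτ (mul_pos (mem_Ioi.1 hp) hls)
      (mul_pos (mem_Ioi.1 hp') hls) (mul_le_mul_of_nonneg_right hpp' hls.le)) hs.le
  · filter_upwards [eventually_gt_atTop 0] with s hs
    exact mul_pos hq (div_pos (hlam _ (mul_pos hs ht)) (hlam s hs))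
  · rw [hrq]
    refine (((hlim q hq).comp (tendsto_id.atTop_mul_const ht)).const_mul t).congr' ?_
    filter_upwards [eventually_gt_atTop 0] with s hs
    have hls := (hlam s hs).ne'
    simp only [Function.comp_apply, id_eq, mul_assoc, div_mul_cancel₀ _ hls]
    field_simp

theorem map_mul_of_tendsto_rescaled (hτ : AntitoneOn τ (Ioi 0))
    (hlam : ∀ s, 0 < s → 0 < lam s) (hanti : StrictAntiOn h (Ioi 0))
    (hpos : ∀ q, 0 < q → 0 < h q) (hsurj : SurjOn h (Ioi 0) (Ioi 0))
    (hlim : ∀ q, 0 < q → Tendsto (fun s => τ (q * lam s) / s) atTop (𝓝 (h q)))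
    {p q : ℝ} (hp : 0 < p) (hq : 0 < q) : h (p * q) = h p / h 1 * h q := by
  have hh1 := hpos 1 one_pos
  have ht : 0 < h p / h 1 := div_pos (hpos p hp) hh1
  obtain ⟨r, hr, hrq⟩ := hsurj (mul_pos ht (hpos q hq))
  have hrp : r / q = p / 1 := tendsto_nhds_unique
    (tendsto_div_of_tendsto_rescaled hτ hlam hanti hlim ht hq hr hrq)
    (tendsto_div_of_tendsto_rescaled hτ hlam hanti hlim ht one_pos hp
      (div_mul_cancel₀ _ hh1.ne').symm)
  rw [← hrq, (div_eq_iff hq.ne').1 hrp, div_one]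

theorem exists_rpow_of_tendsto_rescaled (hτ : AntitoneOn τ (Ioi 0))
    (hlam : ∀ s, 0 < s → 0 < lam s) (hanti : StrictAntiOn h (Ioi 0))
    (hcont : ContinuousOn h (Ioi 0)) (hpos : ∀ q, 0 < q → 0 < h q)
    (hsurj : SurjOn h (Ioi 0) (Ioi 0))
    (hlim : ∀ q, 0 < q → Tendsto (fun s => τ (q * lam s) / s) atTop (𝓝 (h q))) :
    ∃ c : ℝ, 0 < c ∧ (∀ q, 0 < q → h q = h 1 * q ^ (-c)) ∧
      ∀ t, 0 < t → Tendsto (fun s => lam s / lam (s * t)) atTop (𝓝 (t ^ c⁻¹)) := by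
  have hh1 := hpos 1 one_pos
  obtain ⟨e, he⟩ := exists_eq_rpow_of_map_mul (T := fun q => h q / h 1)
    (fun q hq => div_pos (hpos q hq) hh1) (hcont.div_const _) fun p q hp hq => by
      rw [map_mul_of_tendsto_rescaled hτ hlam hanti hpos hsurj hlim hp hq, mul_div_assoc]
  have hpow : ∀ q, 0 < q → h q = h 1 * q ^ e := fun q hq => by
    rw [← he q hq, mul_div_cancel₀ _ hh1.ne']
  have he0 : e < 0 := by
    have hlt : h 2 < h 1 := hanti (mem_Ioi.2 one_pos) (mem_Ioi.2 two_pos) one_lt_two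
    rw [hpow 2 two_pos, mul_lt_iff_lt_one_right hh1] at hlt
    exact (Real.rpow_lt_one_iff_of_pos two_pos).1 hlt |>.resolve_right (by norm_num) |>.2
  refine ⟨-e, neg_pos.2 he0, by simpa using hpow, fun t ht => ?_⟩
  have hr : 0 < t ^ e⁻¹ := Real.rpow_pos_of_pos ht _
  have hrt : h (t ^ e⁻¹) = t * h 1 := by
    rw [hpow _ hr, Real.rpow_inv_rpow ht.le he0.ne, mul_comm]
  have hratio := (tendsto_div_of_tendsto_rescaled hτ hlam hanti hlim ht one_pos hr hrt).inv₀
    (div_pos hr one_pos).ne'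
  simpa only [inv_div, one_div, inv_neg, Real.rpow_neg ht.le] using hratio

end PowerLaws

section WeakConvergence

theorem tendsto_integral_prodMk {ι X Y : Type*} {l : Filter ι}
    [TopologicalSpace X] [TopologicalSpace.PseudoMetrizableSpace X] [SecondCountableTopology X]
    [MeasurableSpace X] [OpensMeasurableSpace X] [Nonempty X]
    [TopologicalSpace Y] [TopologicalSpace.PseudoMetrizableSpace Y] [SecondCountableTopology Y]
    [MeasurableSpace Y] [OpensMeasurableSpace Y]
    {μ : ι → FiniteMeasure X} {μ₀ : FiniteMeasure X} (hμ₀ : μ₀ ≠ 0) (hμ : Tendsto μ l (𝓝 μ₀))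
    {y : ι → Y} {y₀ : Y} (hy : Tendsto y l (𝓝 y₀)) (F : BoundedContinuousFunction (X × Y) ℝ) :
    Tendsto (fun i => ∫ x, F (x, y i) ∂(μ i : Measure X)) l
      (𝓝 (∫ x, F (x, y₀) ∂(μ₀ : Measure X))) := by
  have hint : ∀ (m : FiniteMeasure X) (z : Y), ∫ x, F (x, z) ∂(m : Measure X) =
      m.mass * ∫ p, F p ∂(m.normalize.prod (diracProba z) : Measure (X × Y)) := by
    intro m z
    have hprod : (m.normalize.prod (diracProba z) : Measure (X × Y)) =
        (m.normalize : Measure X).map fun x => (x, z) := Measure.prod_dirac z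
    rw [hprod, integral_map (by fun_prop) F.continuous.aestronglyMeasurable]
    nth_rw 1 [m.self_eq_mass_smul_normalize]
    rw [FiniteMeasure.toMeasure_smul, integral_smul_nnreal_measure, NNReal.smul_def, smul_eq_mul]
    rfl
  obtain ⟨hnorm, hmass⟩ := (FiniteMeasure.tendsto_normalize_iff_tendsto hμ₀).2 hμ
  have hprod := (ProbabilityMeasure.continuous_prod.tendsto _).comp
    (hnorm.prodMk_nhds ((continuous_diracProba.tendsto y₀).comp hy))
  simp only [hint]
  exact ((NNReal.continuous_coe.tendsto _).comp hmass).mul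
    (((ProbabilityMeasure.continuous_integral_boundedContinuousFunction F).tendsto _).comp hprod)

/-- Weak convergence on `(0, ∞)` to `μ₀` of the measures `μ i` scaled by `lam i` in space and by
`a i` in mass. Bounded continuous functions on `(0, ∞)` are encoded as functions on `ℝ` that are
continuous and bounded there. -/
def TendstoRescaled {ι : Type*} (l : Filter ι) (μ : ι → Measure ℝ) (a lam : ι → ℝ)
    (μ₀ : Measure ℝ) : Prop :=
  ∀ f : ℝ → ℝ, ContinuousOn f (Ioi 0) → (∃ M : ℝ, ∀ x ∈ Ioi (0 : ℝ), |f x| ≤ M) →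
    Tendsto (fun i => a i * ∫ x in Ioi (0 : ℝ), f (lam i * x) ∂(μ i)) l
      (𝓝 (∫ x in Ioi (0 : ℝ), f x ∂μ₀))

/-- The image on the whole line of the restriction of `μ` to `(0, ∞)` under `x ↦ log (k * x)`. It
turns dilations into translations. -/
def logLaw (μ : Measure ℝ) [IsFiniteMeasure μ] (k : ℝ) : FiniteMeasure ℝ :=
  ⟨(μ.restrict (Ioi 0)).map fun x => Real.log (k * x), inferInstance⟩

theorem integral_logLaw (μ : Measure ℝ) [IsFiniteMeasure μ] (k : ℝ) {f : ℝ → ℝ}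
    (hf : Continuous f) :
    ∫ z, f z ∂(logLaw μ k : Measure ℝ) = ∫ x in Ioi (0 : ℝ), f (Real.log (k * x)) ∂μ :=
  integral_map (by fun_prop) hf.aestronglyMeasurable

theorem logLaw_ne_zero {μ : Measure ℝ} [IsFiniteMeasure μ] (hμ : μ (Ioi 0) ≠ 0) (k : ℝ) :
    logLaw μ k ≠ 0 := by
  intro h
  have huniv : (logLaw μ k : Measure ℝ) univ = 0 := by rw [h]; rfl
  rw [logLaw, FiniteMeasure.toMeasure_mk, Measure.map_apply (by fun_prop) .univ] at huniv
  exact hμ (by simpa using huniv)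

namespace TendstoRescaled

variable {ι : Type*} {l : Filter ι} {μ : ι → Measure ℝ} {a lam : ι → ℝ} {μ₀ : Measure ℝ}

theorem comp {ι' : Type*} {l' : Filter ι'} {u : ι' → ι} (h : TendstoRescaled l μ a lam μ₀)
    (hu : Tendsto u l' l) :
    TendstoRescaled l' (fun i => μ (u i)) (fun i => a (u i)) (fun i => lam (u i)) μ₀ :=
  fun f hf hbdd => (h f hf hbdd).comp hu

theorem tendsto_smul_logLaw [∀ i, IsFiniteMeasure (μ i)] [IsFiniteMeasure μ₀]
    (h : TendstoRescaled l μ a lam μ₀) (ha : ∀ i, 0 ≤ a i) :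
    Tendsto (fun i => (a i).toNNReal • logLaw (μ i) (lam i)) l (𝓝 (logLaw μ₀ 1)) := by
  refine FiniteMeasure.tendsto_iff_forall_integral_tendsto.2 fun f => ?_
  have hlim := h (fun x => f (Real.log x))
    (f.continuous.comp_continuousOn (Real.continuousOn_log.mono fun x hx => ne_of_gt hx))
    ⟨‖f‖, fun x _ => f.norm_coe_le_norm _⟩
  simpa only [FiniteMeasure.toMeasure_smul, integral_smul_nnreal_measure, NNReal.smul_def,
    Real.coe_toNNReal _ (ha _), smul_eq_mul, integral_logLaw _ _ f.continuous, one_mul] using hlim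

theorem tendsto_integral_comp_mul [∀ i, IsFiniteMeasure (μ i)] [IsFiniteMeasure μ₀]
    (h : TendstoRescaled l μ a lam μ₀) (hμ₀ : μ₀ (Ioi 0) ≠ 0) (ha : ∀ i, 0 ≤ a i)
    (hlam : ∀ i, 0 < lam i) {lam' : ι → ℝ} (hlam' : ∀ i, 0 < lam' i) {k : ℝ} (hk : 0 < k)
    (hratio : Tendsto (fun i => lam' i / lam i) l (𝓝 k)) {f : ℝ → ℝ}
    (hf : ContinuousOn f (Ioi 0)) (hbdd : ∃ M : ℝ, ∀ x ∈ Ioi (0 : ℝ), |f x| ≤ M) :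
    Tendsto (fun i => a i * ∫ x in Ioi (0 : ℝ), f (lam' i * x) ∂(μ i)) l
      (𝓝 (∫ x in Ioi (0 : ℝ), f (k * x) ∂μ₀)) := by
  obtain ⟨M, hM⟩ := hbdd
  have hFcont : Continuous fun p : ℝ × ℝ => f (Real.exp (p.1 + p.2)) :=
    hf.comp_continuous (by fun_prop) fun p => Real.exp_pos _
  let F : BoundedContinuousFunction (ℝ × ℝ) ℝ :=
    .ofNormedAddCommGroup _ hFcont M fun p => hM _ (Real.exp_pos _)
  have hF : ∀ {m : Measure ℝ} [IsFiniteMeasure m] {c r : ℝ}, 0 < c → 0 < r →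
      ∫ z, F (z, Real.log r) ∂(logLaw m c : Measure ℝ) =
        ∫ x in Ioi (0 : ℝ), f (c * r * x) ∂m := by
    intro m _ c r hc hr
    rw [integral_logLaw (f := fun z => F (z, Real.log r)) _ _ (by fun_prop)]
    refine setIntegral_congr_fun measurableSet_Ioi fun x hx => ?_
    have hexp : Real.exp (Real.log (c * x) + Real.log r) = c * r * x := by
      rw [Real.exp_add, Real.exp_log (mul_pos hc hx), Real.exp_log hr, mul_right_comm]
    exact congrArg f hexp
  have hlim := tendsto_integral_prodMk (logLaw_ne_zero hμ₀ 1) (h.tendsto_smul_logLaw ha)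
    (hratio.log hk.ne') F
  rw [hF one_pos hk, one_mul] at hlim
  refine hlim.congr fun i => ?_
  rw [FiniteMeasure.toMeasure_smul, integral_smul_nnreal_measure, NNReal.smul_def,
    Real.coe_toNNReal _ (ha i), hF (hlam i) (div_pos (hlam' i) (hlam i)),
    mul_div_cancel₀ _ (hlam i).ne', smul_eq_mul]

end TendstoRescaled

end WeakConvergence

section BranchingSolutions

/-- Nonzero finite measures `ν t` on `(0, ∞)`, for `t > 0`, whose Laplace exponents and masses are
driven by `Ψ`. The mass is the Laplace exponent at `q = ∞`. -/
structure IsBranchingSolution (Ψ : ℝ → ℝ) (ν : ℝ → Measure ℝ) : Prop where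
  isFiniteMeasure : ∀ t, 0 < t → IsFiniteMeasure (ν t)
  ne_zero : ∀ t, 0 < t → ν t (Ioi 0) ≠ 0
  hasDerivAt_laplaceExponent : ∀ q, 0 < q → ∀ t, 0 < t →
    HasDerivAt (fun u => laplaceExponent (ν u) q) (-Ψ (laplaceExponent (ν t) q)) t
  hasDerivAt_mass : ∀ t, 0 < t →
    HasDerivAt (fun u => (ν u).real (Ioi 0)) (-Ψ ((ν t).real (Ioi 0))) t

/-- The measures `ν t`, rescaled by `lam t` in space and by `a t` in mass, converge weakly to the
nonzero measure `νhat` as `t → ∞`. -/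
structure HasScalingLimit (ν : ℝ → Measure ℝ) (a lam : ℝ → ℝ) (νhat : Measure ℝ) : Prop where
  amplitude_pos : ∀ t, 0 < t → 0 < a t
  scale_pos : ∀ t, 0 < t → 0 < lam t
  ne_zero : νhat (Ioi 0) ≠ 0
  tendsto : TendstoRescaled atTop ν a lam νhat

/-- The time lag between the flow lines through the Laplace exponent at `q` and through the mass,
measured at time `1`. By `delay_eq` it is the same at all times. -/
def delay (Ψ : ℝ → ℝ) (ν : ℝ → Measure ℝ) (q : ℝ) : ℝ :=
  flowTime Ψ (laplaceExponent (ν 1) q) - flowTime Ψ ((ν 1).real (Ioi 0))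

variable {Ψ : ℝ → ℝ} {γ : ℝ} {ν : ℝ → Measure ℝ} {a lam : ℝ → ℝ} {νhat : Measure ℝ} {q t : ℝ}

namespace IsBranchingSolution

theorem isFlowLine_laplaceExponent (hν : IsBranchingSolution Ψ ν) (hq : 0 < q) :
    IsFlowLine Ψ fun t => laplaceExponent (ν t) q where
  pos t ht :=
    have := hν.isFiniteMeasure t ht
    laplaceExponent_pos (hν.ne_zero t ht) hq
  hasDerivAt := hν.hasDerivAt_laplaceExponent q hq

theorem isFlowLine_mass (hν : IsBranchingSolution Ψ ν) :
    IsFlowLine Ψ fun t => (ν t).real (Ioi 0) where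
  pos t ht :=
    have := hν.isFiniteMeasure t ht
    mass_pos (hν.ne_zero t ht)
  hasDerivAt := hν.hasDerivAt_mass

theorem delay_eq (hν : IsBranchingSolution Ψ ν) (hΨ : IsRegularMechanism Ψ γ) (hq : 0 < q)
    (ht : 0 < t) :
    delay Ψ ν q = flowTime Ψ (laplaceExponent (ν t) q) - flowTime Ψ ((ν t).real (Ioi 0)) := by
  rw [delay]
  linarith [(hν.isFlowLine_laplaceExponent hq).flowTime_sub hΨ.continuousOn hΨ.pos one_pos ht,
    hν.isFlowLine_mass.flowTime_sub hΨ.continuousOn hΨ.pos one_pos ht]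

theorem antitoneOn_delay (hν : IsBranchingSolution Ψ ν) (hΨ : IsRegularMechanism Ψ γ) :
    AntitoneOn (delay Ψ ν) (Ioi 0) := by
  intro p hp q hq hpq
  have := hν.isFiniteMeasure 1 one_pos
  have hpos := fun {q : ℝ} (hq : 0 < q) => (hν.isFlowLine_laplaceExponent hq).pos 1 one_pos
  exact sub_le_sub_right ((strictAntiOn_flowTime hΨ.continuousOn hΨ.pos).antitoneOn
    (hpos hp) (hpos hq) ((strictMonoOn_laplaceExponent (hν.ne_zero 1 one_pos)).monotoneOn
      (Ioi_subset_Ici_self hp) (Ioi_subset_Ici_self hq) hpq)) _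

theorem regularlyVarying_flowTime (hν : IsBranchingSolution Ψ ν) (hΨ : IsRegularMechanism Ψ γ) :
    IsRegularlyVaryingAtZero (flowTime Ψ) (1 - γ) :=
  hΨ.regularlyVarying_flowTime
    (hν.isFlowLine_mass.tendsto_flowTime_atTop hΨ.continuousOn hΨ.pos)

theorem tendsto_mass_div_mass (hν : IsBranchingSolution Ψ ν) (hΨ : IsRegularMechanism Ψ γ)
    (ht : 0 < t) :
    Tendsto (fun s => (ν (s * t)).real (Ioi 0) / (ν s).real (Ioi 0)) atTop
      (𝓝 (t ^ (1 - γ)⁻¹)) := by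
  have hmass := hν.isFlowLine_mass
  have htop := hmass.tendsto_flowTime_atTop hΨ.continuousOn hΨ.pos
  have hlin := hmass.tendsto_flowTime_div hΨ.continuousOn hΨ.pos
  have hst : Tendsto (fun s => s * t) atTop atTop := tendsto_id.atTop_mul_const ht
  refine (hν.regularlyVarying_flowTime hΨ).tendsto_div_of_tendsto_apply_div_apply
    (sub_neg.2 hΨ.one_lt) (strictAntiOn_flowTime hΨ.continuousOn hΨ.pos).antitoneOn
    (htop.eventually_gt_atTop 0) (hmass.tendsto_nhdsGT_zero hΨ.continuousOn hΨ.pos) ?_ ht ?_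
  · filter_upwards [eventually_gt_atTop 0] with s hs using hmass.pos _ (mul_pos hs ht)
  · have hquot := ((hlin.comp hst).div hlin one_ne_zero).const_mul t
    rw [div_one, mul_one] at hquot
    refine hquot.congr' ?_
    filter_upwards [eventually_gt_atTop 0] with s hs
    simp only [Pi.div_apply, Function.comp_apply]
    field_simp

end IsBranchingSolution

namespace HasScalingLimit

theorem tendsto_mul_mass (h : HasScalingLimit ν a lam νhat) :
    Tendsto (fun s => a s * (ν s).real (Ioi 0)) atTop (𝓝 (νhat.real (Ioi 0))) := by
  simpa using h.tendsto (fun _ => 1) continuousOn_const ⟨1, by simp⟩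

theorem tendsto_mul_laplaceExponent (h : HasScalingLimit ν a lam νhat) (hq : 0 < q) :
    Tendsto (fun s => a s * laplaceExponent (ν s) (q * lam s)) atTop
      (𝓝 (laplaceExponent νhat q)) := by
  simpa only [laplaceExponent, mul_assoc] using
    h.tendsto (fun x => 1 - Real.exp (-(q * x))) (by fun_prop)
      ⟨1, fun x hx => abs_one_sub_exp_neg_le (mul_nonneg hq.le (le_of_lt hx))⟩

variable [IsFiniteMeasure νhat]

theorem tendsto_laplaceExponent_div_mass (h : HasScalingLimit ν a lam νhat) (hq : 0 < q) :
    Tendsto (fun s => laplaceExponent (ν s) (q * lam s) / (ν s).real (Ioi 0)) atTop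
      (𝓝 (laplaceExponent νhat q / νhat.real (Ioi 0))) := by
  refine ((h.tendsto_mul_laplaceExponent hq).div h.tendsto_mul_mass
    (mass_pos h.ne_zero).ne').congr' ?_
  filter_upwards [eventually_gt_atTop 0] with s hs
  exact mul_div_mul_left _ _ (h.amplitude_pos s hs).ne'

theorem tendsto_delay_div (h : HasScalingLimit ν a lam νhat) (hν : IsBranchingSolution Ψ ν)
    (hΨ : IsRegularMechanism Ψ γ) (hq : 0 < q) :
    Tendsto (fun s => delay Ψ ν (q * lam s) / s) atTop (𝓝 (scalingProfile γ νhat q)) := by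
  have hmass := hν.isFlowLine_mass
  have hzero := hmass.tendsto_nhdsGT_zero hΨ.continuousOn hΨ.pos
  have hpos := (hmass.tendsto_flowTime_atTop hΨ.continuousOn hΨ.pos).eventually_gt_atTop 0
  have hratio := (hν.regularlyVarying_flowTime hΨ).tendsto_apply_div_apply
    (strictAntiOn_flowTime hΨ.continuousOn hΨ.pos).antitoneOn hpos hzero
    (laplaceExponent_div_mass_mem_Ioo h.ne_zero hq).1 (h.tendsto_laplaceExponent_div_mass hq)
  have hlim := (hratio.sub_const 1).mul (hmass.tendsto_flowTime_div hΨ.continuousOn hΨ.pos)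
  rw [mul_one] at hlim
  refine hlim.congr' ?_
  filter_upwards [eventually_gt_atTop 0, hzero.eventually hpos] with s hs hTs
  rw [hν.delay_eq hΨ (mul_pos hq (h.scale_pos s hs)) hs]
  field_simp

theorem exists_scale_exponent (h : HasScalingLimit ν a lam νhat) (hν : IsBranchingSolution Ψ ν)
    (hΨ : IsRegularMechanism Ψ γ) :
    ∃ c : ℝ, 0 < c ∧ c ≤ γ - 1 ∧
      ∀ t, 0 < t → Tendsto (fun s => lam s / lam (s * t)) atTop (𝓝 (t ^ c⁻¹)) := by
  obtain ⟨c, hc, hpow, hratio⟩ := exists_rpow_of_tendsto_rescaled (hν.antitoneOn_delay hΨ)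
    h.scale_pos (strictAntiOn_scalingProfile hΨ.one_lt h.ne_zero)
    (continuousOn_scalingProfile h.ne_zero)
    (fun q hq => scalingProfile_pos hΨ.one_lt h.ne_zero hq)
    (surjOn_scalingProfile hΨ.one_lt h.ne_zero) fun q hq => h.tendsto_delay_div hν hΨ hq
  refine ⟨c, hc, ?_, hratio⟩
  refine le_of_mul_rpow_neg_le (C := scalingProfile γ νhat 1) (D := 1 + scalingProfile γ νhat 1)
    (scalingProfile_pos hΨ.one_lt h.ne_zero one_pos) ?_
  filter_upwards [Ioo_mem_nhdsGT one_pos] with q hq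
  rw [← hpow q hq.1, neg_sub, mul_comm]
  linarith [one_add_scalingProfile_le hΨ.one_lt h.ne_zero hq.1 hq.2.le]

theorem tendsto_amplitude_div (h : HasScalingLimit ν a lam νhat) (hν : IsBranchingSolution Ψ ν)
    (hΨ : IsRegularMechanism Ψ γ) (ht : 0 < t) :
    Tendsto (fun s => a s / a (s * t)) atTop (𝓝 (t ^ (1 - γ)⁻¹)) := by
  have hm := (mass_pos h.ne_zero).ne'
  have hst : Tendsto (fun s => s * t) atTop atTop := tendsto_id.atTop_mul_const ht
  have hlim := (h.tendsto_mul_mass.div (h.tendsto_mul_mass.comp hst) hm).mul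
    (hν.tendsto_mass_div_mass hΨ ht)
  rw [div_self hm, one_mul] at hlim
  refine hlim.congr' ?_
  filter_upwards [eventually_gt_atTop 0] with s hs
  have hmst := (hν.isFlowLine_mass.pos (s * t) (mul_pos hs ht)).ne'
  have hms := (hν.isFlowLine_mass.pos s hs).ne'
  simp only [Pi.div_apply, Function.comp_apply]
  field_simp

theorem tendsto_mul_integral (h : HasScalingLimit ν a lam νhat) (hν : IsBranchingSolution Ψ ν)
    (ht : 0 < t) {A k : ℝ} (hk : 0 < k)
    (hamplitude : Tendsto (fun s => a s / a (s * t)) atTop (𝓝 A))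
    (hscale : Tendsto (fun s => lam s / lam (s * t)) atTop (𝓝 k)) {f : ℝ → ℝ}
    (hf : ContinuousOn f (Ioi 0)) (hbdd : ∃ M : ℝ, ∀ x ∈ Ioi (0 : ℝ), |f x| ≤ M) :
    Tendsto (fun s => a s * ∫ x in Ioi (0 : ℝ), f (lam s * x) ∂(ν (s * t))) atTop
      (𝓝 (A * ∫ x in Ioi (0 : ℝ), f (k * x) ∂νhat)) := by
  have hst (s : Ioi (0 : ℝ)) : 0 < s * t := mul_pos s.2 ht
  have hfin (s : Ioi (0 : ℝ)) : IsFiniteMeasure (ν (s * t)) := hν.isFiniteMeasure _ (hst s)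
  have htop : Tendsto (fun s : Ioi (0 : ℝ) => s * t) atTop atTop :=
    tendsto_comp_val_Ioi_atTop.2 (tendsto_id.atTop_mul_const ht)
  have hlim := (h.tendsto.comp htop).tendsto_integral_comp_mul h.ne_zero
    (fun s => (h.amplitude_pos _ (hst s)).le) (fun s => h.scale_pos _ (hst s))
    (fun s => h.scale_pos s s.2) hk (tendsto_comp_val_Ioi_atTop.2 hscale) hf hbdd
  refine tendsto_comp_val_Ioi_atTop.1
    (((tendsto_comp_val_Ioi_atTop.2 hamplitude).mul hlim).congr fun s => ?_)
  rw [← mul_assoc, div_mul_cancel₀ _ (h.amplitude_pos _ (hst s)).ne']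

end HasScalingLimit

end BranchingSolutions

theorem asymptotic_self_similarity_general {Ψ : ℝ → ℝ} {γ : ℝ} {ν : ℝ → Measure ℝ}
    {a lam : ℝ → ℝ} {νhat : Measure ℝ} [IsFiniteMeasure νhat] (hΨ : IsRegularMechanism Ψ γ)
    (hν : IsBranchingSolution Ψ ν) (h : HasScalingLimit ν a lam νhat) :
    ∃ ρ : ℝ, 0 < ρ ∧ ρ ≤ 1 ∧
      ∀ t : ℝ, 0 < t →
        ∀ f : ℝ → ℝ, ContinuousOn f (Ioi 0) →
          (∃ M : ℝ, ∀ x ∈ Ioi (0 : ℝ), |f x| ≤ M) →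
          Tendsto (fun s => a s * ∫ x in Ioi (0 : ℝ), f (lam s * x) ∂(ν (s * t))) atTop
            (𝓝 (t ^ (1 / (1 - γ)) *
              ∫ x in Ioi (0 : ℝ), f (t ^ (1 / (ρ * (γ - 1))) * x) ∂νhat)) := by
  obtain ⟨c, hc, hcγ, hscale⟩ := h.exists_scale_exponent hν hΨ
  have hγ : 0 < γ - 1 := sub_pos.2 hΨ.one_lt
  refine ⟨c / (γ - 1), div_pos hc hγ, (div_le_one hγ).2 hcγ, fun t ht f hf hbdd => ?_⟩
  rw [div_mul_cancel₀ _ hγ.ne', one_div, one_div]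
  exact h.tendsto_mul_integral hν ht (Real.rpow_pos_of_pos ht _)
    (h.tendsto_amplitude_div hν hΨ ht) (hscale t ht) hf hbdd

/-- under the scaling-limit hypotheses for a critical branching
mechanism regularly varying at 0 with index `γ ∈ (1,2]`, there exists
`ρ ∈ (0,1]` such that the solution is asymptotically self-similar: for every
fixed `t > 0` and every bounded continuous `f` on `(0,∞)`,
`α(s) ∫ f(λ(s)x) ν_{st}(dx) → t^{1/(1-γ)} ∫ f(t^{1/(ρ(γ-1))}x) ν̂(dx)`
as `s → ∞`. -/
theorem asymptotic_self_similarity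
    (Ψ : ℝ → ℝ) (β : ℝ) (π : Measure ℝ)
    (hβ : 0 ≤ β)
    (hπfin : ∫⁻ x in Ioi (0:ℝ), ENNReal.ofReal (min x (x ^ 2)) ∂π < ⊤)
    (hΨ : ∀ u : ℝ, 0 < u →
      Ψ u = β * u ^ 2 + ∫ x in Ioi (0:ℝ), (Real.exp (-(u * x)) - 1 + u * x) ∂π)
    (γ : ℝ) (hγ : 1 < γ ∧ γ ≤ 2)
    (hreg : ∀ x : ℝ, 0 < x →
      Tendsto (fun t => Ψ (t * x) / Ψ t) (nhdsWithin 0 (Ioi 0)) (nhds (x ^ γ)))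
    (ν : ℝ → Measure ℝ)
    (hfin : ∀ t : ℝ, 0 < t → IsFiniteMeasure (ν t))
    (hnz : ∀ t : ℝ, 0 < t → ν t (Ioi 0) ≠ 0)
    (hconc : ∀ t : ℝ, 0 < t → ν t (Iic 0) = 0)
    (hode : ∀ q : ℝ, 0 < q → ∀ t : ℝ, 0 < t →
      HasDerivAt (fun u => ∫ x in Ioi (0:ℝ), (1 - Real.exp (-(q * x))) ∂(ν u))
        (-Ψ (∫ x in Ioi (0:ℝ), (1 - Real.exp (-(q * x))) ∂(ν t))) t)
    (hodeInf : ∀ t : ℝ, 0 < t →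
      HasDerivAt (fun u => ((ν u) (Ioi 0)).toReal) (-Ψ (((ν t) (Ioi 0)).toReal)) t)
    (a lam : ℝ → ℝ) (ha : ∀ t : ℝ, 0 < t → 0 < a t) (hlam : ∀ t : ℝ, 0 < t → 0 < lam t)
    (νhat : Measure ℝ) (hνhatfin : IsFiniteMeasure νhat)
    (hνhatnz : νhat (Ioi 0) ≠ 0) (hνhatc : νhat (Iic 0) = 0)
    (hlim : ∀ f : ℝ → ℝ, ContinuousOn f (Ioi 0) →
      (∃ M : ℝ, ∀ x ∈ Ioi (0:ℝ), |f x| ≤ M) →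
      Tendsto (fun t => a t * ∫ x in Ioi (0:ℝ), f (lam t * x) ∂(ν t)) atTop
        (nhds (∫ x in Ioi (0:ℝ), f x ∂νhat))) :
    ∃ ρ : ℝ, 0 < ρ ∧ ρ ≤ 1 ∧
      ∀ t : ℝ, 0 < t →
        ∀ f : ℝ → ℝ, ContinuousOn f (Ioi 0) →
          (∃ M : ℝ, ∀ x ∈ Ioi (0:ℝ), |f x| ≤ M) →
          Tendsto (fun s => a s * ∫ x in Ioi (0:ℝ), f (lam s * x) ∂(ν (s * t))) atTop
            (nhds (t ^ (1 / (1 - γ)) *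
              ∫ x in Ioi (0:ℝ), f (t ^ (1 / (ρ * (γ - 1))) * x) ∂νhat)) := by
  exact asymptotic_self_similarity_general
    (.of_eq_branchingMechanism hβ (integrableOn_min_sq hπfin) hΨ hγ.1 hreg)
    ⟨hfin, hnz, hode, hodeInf⟩ ⟨ha, hlam, hνhatnz, hlim⟩
end
end

section
/- (Uniform Convergence Lemma.) Let f : (0,∞) → (0,∞) be monotone and regularly varying at infinity with index ρ ≠ 0, and let h : (0,∞) → (0,∞). Then for any λ ∈ [0,∞], f(x h(x))/f(x) → λ^ρ as x → ∞ if and only if h(x) → λ as x → ∞. Here λ^ρ is interpreted in [0,∞] with the conventions: for ρ > 0, 0^ρ = 0 and ∞^ρ = ∞; for ρ < 0, 0^ρ = ∞ and ∞^ρ = 0; and convergence to 0 or ∞ is understood in the sense of limits in [0,∞]. -/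
open MeasureTheory Set Filter
open scoped ENNReal

noncomputable section

/-!
For `ρ > 0` the map `y ↦ y ^ ρ` is an order automorphism of `[0, ∞]`, and on `(0, ∞)` it is the
pointwise limit, as `t → ∞`, of the maps `y ↦ f (t y) / f t`, which are monotone when `f` is
nondecreasing. Monotonicity turns this pointwise convergence into convergence along a varying
argument: comparing `h` with constants `c` on either side of `λ` squeezes `f (t h) / f t` between
the ratios at those `c`, and conversely locates `h` from the ratio. A nondecreasing `f` of nonzero
index has `ρ > 0`, and a nonincreasing `f` is handled through `1 / f`.
-/

section MonotoneConvergence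

variable {α β γ : Type*} [LinearOrder β] [TopologicalSpace β] [DenselyOrdered β]
  [LinearOrder γ] [TopologicalSpace γ]
  {l : Filter α} {S : Set β} {F : α → β → γ} {H : α → β} {b : β}

theorem tendsto_of_tendsto_monotoneOn_apply [OrderTopology β] [OrderClosedTopology γ]
    {φ : β → γ} (hφ : StrictMono φ) (hS : Dense S)
    (hF : ∀ᶠ a in l, MonotoneOn (F a) S) (hH : ∀ᶠ a in l, H a ∈ S)
    (hlim : ∀ c ∈ S, Tendsto (fun a => F a c) l (nhds (φ c)))
    (h : Tendsto (fun a => F a (H a)) l (nhds (φ b))) : Tendsto H l (nhds b) := by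
  refine tendsto_order.2 ⟨fun x hx => ?_, fun x hx => ?_⟩
  · obtain ⟨c, hcS, hxc, hcb⟩ := hS.exists_between hx
    filter_upwards [hF, hH, (hlim c hcS).eventually_lt h (hφ hcb)] with a hFa hHa hlt
    exact hxc.trans (hFa.reflect_lt hcS hHa hlt)
  · obtain ⟨c, hcS, hbc, hcx⟩ := hS.exists_between hx
    filter_upwards [hF, hH, h.eventually_lt (hlim c hcS) (hφ hbc)] with a hFa hHa hlt
    exact (hFa.reflect_lt hHa hcS hlt).trans hcx

theorem tendsto_monotoneOn_apply [OrderClosedTopology β] [OrderTopology γ]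
    (φ : β ≃o γ) (hS : Dense S)
    (hF : ∀ᶠ a in l, MonotoneOn (F a) S) (hH : ∀ᶠ a in l, H a ∈ S)
    (hlim : ∀ c ∈ S, Tendsto (fun a => F a c) l (nhds (φ c)))
    (h : Tendsto H l (nhds b)) : Tendsto (fun a => F a (H a)) l (nhds (φ b)) := by
  refine tendsto_order.2 ⟨fun x hx => ?_, fun x hx => ?_⟩
  · obtain ⟨c, hcS, hxc, hcb⟩ := hS.exists_between (φ.symm_apply_lt.2 hx)
    filter_upwards [hF, hH, (hlim c hcS).eventually_const_lt (φ.symm_apply_lt.1 hxc),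
      h.eventually_const_lt hcb] with a hFa hHa hxF hcH
    exact hxF.trans_le (hFa hcS hHa hcH.le)
  · obtain ⟨c, hcS, hbc, hcx⟩ := hS.exists_between (φ.lt_symm_apply.2 hx)
    filter_upwards [hF, hH, (hlim c hcS).eventually_lt_const (φ.lt_symm_apply.1 hcx),
      h.eventually_lt_const hbc] with a hFa hHa hFx hHc
    exact (hFa hHa hcS hHc.le).trans_lt hFx

theorem tendsto_monotoneOn_apply_iff [OrderTopology β] [OrderTopology γ]
    (φ : β ≃o γ) (hS : Dense S)
    (hF : ∀ᶠ a in l, MonotoneOn (F a) S) (hH : ∀ᶠ a in l, H a ∈ S)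
    (hlim : ∀ c ∈ S, Tendsto (fun a => F a c) l (nhds (φ c))) :
    Tendsto (fun a => F a (H a)) l (nhds (φ b)) ↔ Tendsto H l (nhds b) :=
  ⟨tendsto_of_tendsto_monotoneOn_apply φ.strictMono hS hF hH hlim,
    tendsto_monotoneOn_apply φ hS hF hH hlim⟩

end MonotoneConvergence

theorem dense_Ioo_bot_top {β : Type*} [LinearOrder β] [BoundedOrder β] [Nontrivial β]
    [DenselyOrdered β] [TopologicalSpace β] [OrderTopology β] : Dense (Ioo (⊥ : β) ⊤) :=
  dense_iff_closure_eq.2 (by rw [closure_Ioo bot_ne_top, Icc_bot_top])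

/-- Regular variation at infinity with index `ρ`, for a positive function on `(0, ∞)`, encoded as a
function on `ℝ` with arbitrary values outside `(0, ∞)`. -/
structure IsRegularlyVarying (f : ℝ → ℝ) (ρ : ℝ) : Prop where
  pos : ∀ x, 0 < x → 0 < f x
  tendsto : ∀ x, 0 < x → Tendsto (fun t => f (t * x) / f t) atTop (nhds (x ^ ρ))

/-- The ratio `f (t y) / f t` as a function of `y ∈ [0, ∞]`, so that it can be compared with `y ^ ρ`
on all of `[0, ∞]`. It is only meaningful for `0 < y < ∞`: at `y = ∞` it has a junk value. -/
def dilationRatio (f : ℝ → ℝ) (t : ℝ) (y : ℝ≥0∞) : ℝ≥0∞ :=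
  ENNReal.ofReal (f (t * y.toReal) / f t)

theorem dilationRatio_ofReal (f : ℝ → ℝ) (t : ℝ) {y : ℝ} (hy : 0 ≤ y) :
    dilationRatio f t (ENNReal.ofReal y) = ENNReal.ofReal (f (t * y) / f t) := by
  rw [dilationRatio, ENNReal.toReal_ofReal hy]

theorem monotoneOn_dilationRatio {f : ℝ → ℝ} {t : ℝ} (hf : MonotoneOn f (Ioi 0)) (ht : 0 < t)
    (hft : 0 ≤ f t) : MonotoneOn (dilationRatio f t) (Ioo ⊥ ⊤) := by
  intro y hy z hz hyz
  have hmul_pos {w : ℝ≥0∞} (hw : w ∈ Ioo ⊥ ⊤) : 0 < t * w.toReal :=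
    mul_pos ht (ENNReal.toReal_pos hw.1.ne' hw.2.ne)
  have hle : t * y.toReal ≤ t * z.toReal :=
    mul_le_mul_of_nonneg_left (ENNReal.toReal_mono hz.2.ne hyz) ht.le
  exact ENNReal.ofReal_le_ofReal
    (div_le_div_of_nonneg_right (hf (hmul_pos hy) (hmul_pos hz) hle) hft)

namespace IsRegularlyVarying

variable {f : ℝ → ℝ} {ρ : ℝ}

theorem inv (hf : IsRegularlyVarying f ρ) : IsRegularlyVarying f⁻¹ (-ρ) where
  pos x hx := inv_pos.2 (hf.pos x hx)
  tendsto x hx := by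
    rw [Real.rpow_neg hx.le]
    refine ((hf.tendsto x hx).inv₀ (Real.rpow_pos_of_pos hx ρ).ne').congr fun t => ?_
    rw [Pi.inv_apply, Pi.inv_apply, inv_div_inv, inv_div]

theorem index_nonneg (hf : IsRegularlyVarying f ρ) (hmono : MonotoneOn f (Ioi 0)) : 0 ≤ ρ := by
  have one_le_two_rpow : (1 : ℝ) ≤ 2 ^ ρ := by
    refine ge_of_tendsto (hf.tendsto 2 two_pos) ?_
    filter_upwards [eventually_gt_atTop 0] with t ht
    rw [one_le_div (hf.pos t ht)]
    exact hmono ht (mem_Ioi.2 (by positivity)) (by linarith)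
  by_contra! hρ
  exact one_le_two_rpow.not_gt (Real.rpow_lt_one_of_one_lt_of_neg one_lt_two hρ)

theorem tendsto_dilationRatio (hf : IsRegularlyVarying f ρ) {y : ℝ≥0∞} (hy : y ∈ Ioo ⊥ ⊤) :
    Tendsto (fun t => dilationRatio f t y) atTop (nhds (y ^ ρ)) := by
  have hy_pos : 0 < y.toReal := ENNReal.toReal_pos hy.1.ne' hy.2.ne
  have hlim := ENNReal.tendsto_ofReal (hf.tendsto y.toReal hy_pos)
  rwa [← ENNReal.ofReal_rpow_of_pos hy_pos, ENNReal.ofReal_toReal hy.2.ne] at hlim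

variable {α : Type*} {l : Filter α} {u h : α → ℝ}

theorem tendsto_ratio_iff_of_monotoneOn (hf : IsRegularlyVarying f ρ) (hρ : ρ ≠ 0)
    (hmono : MonotoneOn f (Ioi 0)) (hu : Tendsto u l atTop) (hh : ∀ᶠ a in l, 0 < h a)
    (lam : ℝ≥0∞) :
    Tendsto (fun a => ENNReal.ofReal (f (u a * h a) / f (u a))) l (nhds (lam ^ ρ)) ↔
      Tendsto (fun a => ENNReal.ofReal (h a)) l (nhds lam) := by
  have hρ_pos : 0 < ρ := (hf.index_nonneg hmono).lt_of_ne' hρ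
  have hratio : (fun a => ENNReal.ofReal (f (u a * h a) / f (u a))) =ᶠ[l]
      fun a => dilationRatio f (u a) (ENNReal.ofReal (h a)) :=
    hh.mono fun a ha => (dilationRatio_ofReal f (u a) ha.le).symm
  rw [tendsto_congr' hratio]
  refine tendsto_monotoneOn_apply_iff (ENNReal.orderIsoRpow ρ hρ_pos) dense_Ioo_bot_top ?_ ?_
    fun c hc => (hf.tendsto_dilationRatio hc).comp hu
  · filter_upwards [hu.eventually_gt_atTop 0] with a ha
    exact monotoneOn_dilationRatio hmono ha (hf.pos _ ha).le
  · exact hh.mono fun a ha => ⟨ENNReal.ofReal_pos.2 ha, ENNReal.ofReal_lt_top⟩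

theorem tendsto_ratio_iff_of_antitoneOn (hf : IsRegularlyVarying f ρ) (hρ : ρ ≠ 0)
    (hanti : AntitoneOn f (Ioi 0)) (hu : Tendsto u l atTop) (hh : ∀ᶠ a in l, 0 < h a)
    (lam : ℝ≥0∞) :
    Tendsto (fun a => ENNReal.ofReal (f (u a * h a) / f (u a))) l (nhds (lam ^ ρ)) ↔
      Tendsto (fun a => ENNReal.ofReal (h a)) l (nhds lam) := by
  have hmono : MonotoneOn f⁻¹ (Ioi 0) := fun x hx y hy hxy =>
    inv_anti₀ (hf.pos y hy) (hanti hx hy hxy)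
  have hratio : (fun a => (ENNReal.ofReal (f (u a * h a) / f (u a)))⁻¹) =ᶠ[l]
      fun a => ENNReal.ofReal (f⁻¹ (u a * h a) / f⁻¹ (u a)) := by
    filter_upwards [hu.eventually_gt_atTop 0, hh] with a hua hha
    rw [← ENNReal.ofReal_inv_of_pos (div_pos (hf.pos _ (mul_pos hua hha)) (hf.pos _ hua)),
      Pi.inv_apply, Pi.inv_apply, inv_div_inv, inv_div]
  rw [← hf.inv.tendsto_ratio_iff_of_monotoneOn (neg_ne_zero.2 hρ) hmono hu hh lam,
    ← tendsto_congr' hratio, ENNReal.rpow_neg, tendsto_inv_iff]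

end IsRegularlyVarying

theorem uniform_convergence_lemma_general {α : Type*} {l : Filter α} {f : ℝ → ℝ} {u h : α → ℝ}
    {ρ : ℝ} (hf : IsRegularlyVarying f ρ) (hρ : ρ ≠ 0)
    (hmono : MonotoneOn f (Ioi 0) ∨ AntitoneOn f (Ioi 0)) (hu : Tendsto u l atTop)
    (hh : ∀ᶠ a in l, 0 < h a) (lam : ℝ≥0∞) :
    Tendsto (fun a => ENNReal.ofReal (f (u a * h a) / f (u a))) l (nhds (lam ^ ρ)) ↔
      Tendsto (fun a => ENNReal.ofReal (h a)) l (nhds lam) :=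
  hmono.elim (fun hm => hf.tendsto_ratio_iff_of_monotoneOn hρ hm hu hh lam)
    fun ha => hf.tendsto_ratio_iff_of_antitoneOn hρ ha hu hh lam

/-- Uniform Convergence Lemma: if `f > 0` is monotone and
regularly varying at infinity with index `ρ ≠ 0`, and `h > 0`, then for any
`λ ∈ [0,∞]`, `f(x h(x))/f(x) → λ^ρ` as `x → ∞` iff `h(x) → λ` as `x → ∞`,
with limits in `[0,∞]` (and the stated conventions for `λ^ρ`, which are those
of `ENNReal.rpow`). -/
theorem uniform_convergence_lemma
    (f h : ℝ → ℝ) (ρ : ℝ) (hρ : ρ ≠ 0)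
    (hfpos : ∀ x : ℝ, 0 < x → 0 < f x)
    (hmono : MonotoneOn f (Ioi 0) ∨ AntitoneOn f (Ioi 0))
    (hreg : ∀ x : ℝ, 0 < x →
      Tendsto (fun t => f (t * x) / f t) atTop (nhds (x ^ ρ)))
    (hhpos : ∀ x : ℝ, 0 < x → 0 < h x)
    (lam : ℝ≥0∞) :
    Tendsto (fun x => ENNReal.ofReal (f (x * h x) / f x)) atTop (nhds (lam ^ ρ)) ↔
      Tendsto (fun x => ENNReal.ofReal (h x)) atTop (nhds lam) :=
  uniform_convergence_lemma_general ⟨hfpos, hreg⟩ hρ hmono tendsto_id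
    ((eventually_gt_atTop 0).mono hhpos) lam
end
end
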